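/- Let k ≥ 6 be an integer and let α, β ∈ {0,1,…,k}. There exists a k-L(2,1)-labelling L of the gadget G_k with L(u) = L(v) = 0, L(a_u) = α and L(a_v) = β if and only if (α,β) ∈ {(2,k), (k,2), (k−2,k), (k,k−2)}. -/

import Mathlib

/-- For an integer `k`, a `k`-L(2,1)-labelling of a graph `G` is a map from the vertices
to `{0,1,…,k}` such that labels of adjacent vertices differ by at least `2` and vertices
at distance exactly `2` get distinct labels. -/
def IsL21Labelling {V : Type*} (G : SimpleGraph V) (k : ℕ) (L : V → ℕ) : Prop :=
  (∀ v, L v ≤ k) ∧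
  (∀ x y, G.Adj x y → 2 ≤ |(L x : ℤ) - (L y : ℤ)|) ∧
  (∀ x y, G.dist x y = 2 → L x ≠ L y)

/-- The vertices of the graph `H'` for a given `k`:
`c, d, e, f₁, …, f_{k-3}, g, h, i`. -/
inductive HpV (k : ℕ) | c | d | e | f (j : Fin (k - 3)) | g | h | i
deriving DecidableEq

/-- The adjacency generating relation of `H'`: edges `cd`, `de`, `gh`, `gi`,
and `d fⱼ`, `g fⱼ` for every `j`. -/
def HpAdj (k : ℕ) : HpV k → HpV k → Prop := fun x y =>
  (x = HpV.c ∧ y = HpV.d) ∨ (x = HpV.d ∧ y = HpV.e) ∨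
  (x = HpV.g ∧ y = HpV.h) ∨ (x = HpV.g ∧ y = HpV.i) ∨
  (∃ j, (x = HpV.d ∧ y = HpV.f j) ∨ (x = HpV.g ∧ y = HpV.f j))

/-- The vertices of the gadget `G_k` (for `k ≥ 6`): the path `u, a_u, a_v, v`,
the vertices `b₁, …, b_{k-5}`, and for each `i` two copies (indexed by `Bool`)
of the graph `H'`. -/
inductive GkV (k : ℕ)
| u | au | av | v
| b (i : Fin (k - 5))
| hp (i : Fin (k - 5)) (s : Bool) (x : HpV k)

/-- The adjacency generating relation of the gadget `G_k` (for `k ≥ 6`):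
the path `u a_u`, `a_u a_v`, `a_v v`; each `bᵢ` joined to `a_u` and `a_v`;
the vertex `c` of each of the two copies of `H'` at `bᵢ` joined to `bᵢ`;
and the edges of `H'` inside each copy. -/
def GkAdj (k : ℕ) : GkV k → GkV k → Prop := fun x y =>
  (x = GkV.u ∧ y = GkV.au) ∨ (x = GkV.au ∧ y = GkV.av) ∨ (x = GkV.av ∧ y = GkV.v) ∨
  (∃ i, (x = GkV.au ∧ y = GkV.b i) ∨ (x = GkV.av ∧ y = GkV.b i)) ∨
  (∃ i s, x = GkV.b i ∧ y = GkV.hp i s HpV.c) ∨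
  (∃ i s x' y', x = GkV.hp i s x' ∧ y = GkV.hp i s y' ∧ HpAdj k x' y')

/-- The gadget `G_k` (for `k ≥ 6`). -/
def Gk (k : ℕ) : SimpleGraph (GkV k) := SimpleGraph.fromRel (GkAdj k)

/-- Separation by at least two, in a form convenient for `omega`. -/
def Far (a b : ℕ) : Prop := a + 2 ≤ b ∨ b + 2 ≤ a

lemma far_iff (a b : ℕ) : 2 ≤ |(a : ℤ) - (b : ℤ)| ↔ Far a b := by
  unfold Far
  rw [le_abs]
  omega

lemma dist_two_common {V : Type*} (G : SimpleGraph V) {x y : V} (h : G.dist x y = 2) :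
    x ≠ y ∧ ∃ z, G.Adj z x ∧ G.Adj z y := by
  have hne : x ≠ y := by
    rintro rfl
    simp at h
  refine ⟨hne, ?_⟩
  have hr : G.Reachable x y := by
    by_contra hn
    rw [SimpleGraph.dist_eq_zero_of_not_reachable hn] at h
    omega
  obtain ⟨p, hp⟩ := hr.exists_walk_length_eq_dist
  rw [h] at hp
  match p, hp with
  | .cons h1 (.cons h2 .nil), _ => exact ⟨_, h1.symm, h2⟩

lemma IsL21Labelling.ne {V : Type*} {G : SimpleGraph V} {k : ℕ} {L : V → ℕ}
    (hL : IsL21Labelling G k L) {x y : V} (z : V) (h1 : G.Adj z x) (h2 : G.Adj z y)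
    (hne : x ≠ y) : L x ≠ L y := by
  by_cases ha : G.Adj x y
  · have := (far_iff _ _).1 (hL.2.1 x y ha)
    unfold Far at this
    omega
  · apply hL.2.2
    have hr : G.Reachable x y := h1.symm.reachable.trans h2.reachable
    have hle : G.dist x y ≤ 2 := by
      have := SimpleGraph.dist_le (SimpleGraph.Walk.cons h1.symm (SimpleGraph.Walk.cons h2 .nil))
      simpa using this
    have h0 : G.dist x y ≠ 0 := fun h => hne (hr.dist_eq_zero_iff.1 h)
    have h1' : G.dist x y ≠ 1 := fun h => ha (SimpleGraph.dist_eq_one_iff_adj.1 h)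
    omega

lemma IsL21Labelling.far {V : Type*} {G : SimpleGraph V} {k : ℕ} {L : V → ℕ}
    (hL : IsL21Labelling G k L) {x y : V} (h : G.Adj x y) : Far (L x) (L y) :=
  (far_iff _ _).1 (hL.2.1 x y h)

lemma hub (k d p q : ℕ) (hk : 6 ≤ k) (f : Fin (k - 3) → ℕ) (hf : Function.Injective f)
    (hfk : ∀ j, f j ≤ k) (hp : p ≤ k) (hq : q ≤ k) (hd : d ≤ k) (hpq : p ≠ q)
    (hpf : ∀ j, f j ≠ p) (hqf : ∀ j, f j ≠ q)
    (hdf : ∀ j, Far d (f j)) (hdp : Far d p) (hdq : Far d q) : d = 0 ∨ d = k := by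
  by_contra hcon
  push Not at hcon
  have hc : (insert p (insert q (Finset.univ.image f))).card = k - 1 := by
    rw [Finset.card_insert_of_notMem, Finset.card_insert_of_notMem,
      Finset.card_image_of_injective _ hf]
    · simp; omega
    · simpa using hqf
    · simp [hpq]; exact hpf
  have hs : insert p (insert q (Finset.univ.image f)) ⊆
      Finset.Icc 0 k \ Finset.Icc (d - 1) (d + 1) := by
    intro x hx
    simp only [Finset.mem_insert, Finset.mem_image, Finset.mem_univ, true_and] at hx
    simp only [Finset.mem_sdiff, Finset.mem_Icc]
    unfold Far at *
    rcases hx with rfl | rfl | ⟨j, rfl⟩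
    · omega
    · omega
    · have := hfk j
      have := hdf j
      omega
  have h1 := Finset.card_le_card hs
  rw [hc, Finset.card_sdiff_of_subset] at h1
  · simp at h1; omega
  · intro x; simp; omega

lemma fillup (k : ℕ) (f : Fin (k - 3) → ℕ) (hf : Function.Injective f)
    (h : ∀ j, 2 ≤ f j ∧ f j ≤ k - 2) (x : ℕ) (hx : ∀ j, f j ≠ x) : x < 2 ∨ k - 2 < x := by
  by_contra hcon
  push Not at hcon
  have hs : Finset.univ.image f ⊆ Finset.Icc 2 (k - 2) := by
    intro y hy
    simp only [Finset.mem_image, Finset.mem_univ, true_and] at hy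
    obtain ⟨j, rfl⟩ := hy
    simpa using h j
  have he := Finset.eq_of_subset_of_card_le hs (by
    rw [Finset.card_image_of_injective _ hf]; simp; omega)
  have : x ∈ Finset.univ.image f := by rw [he]; simpa using hcon
  simp only [Finset.mem_image, Finset.mem_univ, true_and] at this
  obtain ⟨j, hj⟩ := this
  exact hx j hj

lemma count (n p q : ℕ) (b : Fin n → ℕ) (hb : Function.Injective b)
    (h : ∀ i, p ≤ b i ∧ b i ≤ q) (R : Finset ℕ) (hR : ∀ r ∈ R, p ≤ r ∧ r ≤ q)
    (hbR : ∀ i, b i ∉ R) : n + R.card ≤ q + 1 - p := by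
  have hd : Disjoint (Finset.univ.image b) R := by
    rw [Finset.disjoint_left]
    intro x hx
    simp only [Finset.mem_image, Finset.mem_univ, true_and] at hx
    obtain ⟨i, rfl⟩ := hx
    exact hbR i
  have hs : Finset.univ.image b ∪ R ⊆ Finset.Icc p q := by
    intro x hx
    simp only [Finset.mem_union, Finset.mem_image, Finset.mem_univ, true_and] at hx
    rw [Finset.mem_Icc]
    rcases hx with ⟨i, rfl⟩ | hx
    · exact h i
    · exact hR x hx
  have := Finset.card_le_card hs
  rw [Finset.card_union_of_disjoint hd, Finset.card_image_of_injective _ hb] at this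
  simpa using this

lemma numeric (k α β : ℕ) (hk : 6 ≤ k) (hα : 2 ≤ α) (hαβ : α + 2 ≤ β) (hβ : β ≤ k)
    (b : Fin (k - 5) → ℕ) (hb : Function.Injective b) (h1 : ∀ i, 1 ≤ b i ∧ b i ≤ k - 1)
    (hfa : ∀ i, Far α (b i)) (hfb : ∀ i, Far β (b i)) (h2 : ∀ i, b i = 1 → β ≤ k - 2) :
    β = k ∧ (α = 2 ∨ α = k - 2) := by
  unfold Far at *
  by_cases c1 : β ≤ k - 2
  · have := count _ 1 (k - 1) b hb h1 {α - 1, α, α + 1, β, β + 1}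
      (by intro r hr; simp at hr; omega)
      (by intro i hi; simp at hi; have := hfa i; have := hfb i; omega)
    rw [Finset.card_insert_of_notMem (by simp; omega), Finset.card_insert_of_notMem (by simp; omega),
      Finset.card_insert_of_notMem (by simp; omega), Finset.card_pair (by omega)] at this
    omega
  have h3 : ∀ i, 2 ≤ b i := by
    intro i
    have := h1 i
    by_contra hc
    exact c1 (h2 i (by omega))
  by_cases c2 : β = k
  · refine ⟨c2, ?_⟩
    by_contra hcon
    have := count _ 2 (k - 2) b hb
      (by intro i; have := h1 i; have := h3 i; have := hfb i; omega) {α - 1, α, α + 1}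
      (by intro r hr; simp at hr; omega)
      (by intro i hi; simp at hi; have := hfa i; omega)
    rw [Finset.card_insert_of_notMem (by simp; omega), Finset.card_pair (by omega)] at this
    omega
  · exfalso
    have hbd : ∀ i, 2 ≤ b i ∧ b i ≤ k - 3 := by
      intro i; have := h1 i; have := h3 i; have := hfb i; omega
    by_cases c3 : α = 2
    · have := count _ 2 (k - 3) b hb hbd {2, 3}
        (by intro r hr; simp at hr; omega)
        (by intro i hi; simp at hi; have := hfa i; omega)
      rw [Finset.card_pair (by omega)] at this
      omega
    · have := count _ 2 (k - 3) b hb hbd {α - 1, α}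
        (by intro r hr; simp at hr; omega)
        (by intro i hi; simp at hi; have := hfa i; omega)
      rw [Finset.card_pair (by omega)] at this
      omega

lemma hp_forced (k : ℕ) (hk : 6 ≤ k) (L : GkV k → ℕ) (hL : IsL21Labelling (Gk k) k L)
    (i : Fin (k - 5)) (s : Bool) :
    (L (.hp i s .d) = 0 ∧ k - 1 ≤ L (.hp i s .c)) ∨ (L (.hp i s .d) = k ∧ L (.hp i s .c) ≤ 1) := by
  have adc : (Gk k).Adj (.hp i s .d) (.hp i s .c) := by simp [Gk, GkAdj, HpAdj]
  have ade : (Gk k).Adj (.hp i s .d) (.hp i s .e) := by simp [Gk, GkAdj, HpAdj]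
  have adf : ∀ j, (Gk k).Adj (.hp i s .d) (.hp i s (.f j)) := by simp [Gk, GkAdj, HpAdj]
  have agf : ∀ j, (Gk k).Adj (.hp i s .g) (.hp i s (.f j)) := by simp [Gk, GkAdj, HpAdj]
  have agh : (Gk k).Adj (.hp i s .g) (.hp i s .h) := by simp [Gk, GkAdj, HpAdj]
  have agi : (Gk k).Adj (.hp i s .g) (.hp i s .i) := by simp [Gk, GkAdj, HpAdj]
  have hf : Function.Injective (fun j => L (.hp i s (.f j))) := by
    intro j j' h
    by_contra hne
    exact hL.ne _ (adf j) (adf j') (by simpa using hne) h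
  have hd := hub k (L (.hp i s .d)) (L (.hp i s .c)) (L (.hp i s .e)) hk _ hf
    (fun j => hL.1 _) (hL.1 _) (hL.1 _) (hL.1 _) (hL.ne _ adc ade (by simp))
    (fun j => hL.ne _ (adf j) adc (by simp)) (fun j => hL.ne _ (adf j) ade (by simp))
    (fun j => hL.far (adf j)) (hL.far adc) (hL.far ade)
  have hg := hub k (L (.hp i s .g)) (L (.hp i s .h)) (L (.hp i s .i)) hk _ hf
    (fun j => hL.1 _) (hL.1 _) (hL.1 _) (hL.1 _) (hL.ne _ agh agi (by simp))
    (fun j => hL.ne _ (agf j) agh (by simp)) (fun j => hL.ne _ (agf j) agi (by simp))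
    (fun j => hL.far (agf j)) (hL.far agh) (hL.far agi)
  have hdg : L (.hp i s .d) ≠ L (.hp i s .g) := by
    refine hL.ne (.hp i s (.f ⟨0, by omega⟩)) (adf _).symm (agf _).symm (by simp)
  have hc := fillup k _ hf (by
    intro j
    have h1 := hL.far (adf j)
    have h2 := hL.far (agf j)
    have h3 := hL.1 (.hp i s (.f j))
    unfold Far at h1 h2
    omega) (L (.hp i s .c)) (fun j => hL.ne _ (adf j) adc (by simp))
  have h1 := hL.far adc
  have h2 := hL.1 (.hp i s .c)
  unfold Far at h1
  omega

lemma forward (k : ℕ) (hk : 6 ≤ k) (L : GkV k → ℕ) (hL : IsL21Labelling (Gk k) k L)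
    (hu : L .u = 0) (hv : L .v = 0) :
    (L .av = k ∧ (L .au = 2 ∨ L .au = k - 2)) ∨ (L .au = k ∧ (L .av = 2 ∨ L .av = k - 2)) := by
  have h1 : (Gk k).Adj .au .u := by simp [Gk, GkAdj]
  have h2 : (Gk k).Adj .av .v := by simp [Gk, GkAdj]
  have h3 : (Gk k).Adj .au .av := by simp [Gk, GkAdj]
  have h4 : ∀ i, (Gk k).Adj .au (.b i) := by simp [Gk, GkAdj]
  have h5 : ∀ i, (Gk k).Adj .av (.b i) := by simp [Gk, GkAdj]
  have h6 : ∀ i s, (Gk k).Adj (.b i) (.hp i s .c) := by simp [Gk, GkAdj]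
  have h7 : ∀ i s, (Gk k).Adj (.hp i s .c) (.hp i s .d) := by simp [Gk, GkAdj, HpAdj]
  have hb : Function.Injective (fun i => L (.b i)) := by
    intro j j' h
    by_contra hne
    exact hL.ne _ (h4 j) (h4 j') (by simpa using hne) h
  have hb1 : ∀ i, 1 ≤ L (.b i) ∧ L (.b i) ≤ k - 1 := by
    intro i
    have e1 := hL.ne _ h1 (h4 i) (by simp)
    have e2 := hL.1 (.b i)
    have e3 := hL.ne _ (h6 i true).symm (h7 i true) (by simp)
    have e4 := hL.far (h6 i true)
    have e5 := hp_forced k hk L hL i true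
    have e6 := hL.1 (.hp i true .c)
    unfold Far at e4
    omega
  have hb2 : ∀ i, L (.b i) = 1 → L .au ≤ k - 2 ∧ L .av ≤ k - 2 := by
    intro i hi
    have e1 := hL.far (h6 i true)
    have e2 := hL.far (h6 i false)
    have e3 := hp_forced k hk L hL i true
    have e4 := hp_forced k hk L hL i false
    have e5 := hL.ne _ (h6 i true) (h6 i false) (by simp)
    have e6 := hL.1 (.hp i true .c)
    have e7 := hL.1 (.hp i false .c)
    have e8 := hL.ne _ (h6 i true) (h4 i).symm (by simp)
    have e9 := hL.ne _ (h6 i true) (h5 i).symm (by simp)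
    have e10 := hL.ne _ (h6 i false) (h4 i).symm (by simp)
    have e11 := hL.ne _ (h6 i false) (h5 i).symm (by simp)
    have e12 := hL.1 .au
    have e13 := hL.1 .av
    unfold Far at e1 e2
    omega
  have f1 := hL.far h1
  have f2 := hL.far h2
  have f3 := hL.far h3
  unfold Far at f1 f2 f3
  rcases f3 with f3 | f3
  · left
    exact numeric k _ _ hk (by omega) f3 (hL.1 _) _ hb hb1 (fun i => hL.far (h4 i))
      (fun i => hL.far (h5 i)) (fun i hi => (hb2 i hi).2)
  · right
    exact numeric k _ _ hk (by omega) f3 (hL.1 _) _ hb hb1 (fun i => hL.far (h5 i))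
      (fun i => hL.far (h4 i)) (fun i hi => (hb2 i hi).1)

/-- Labels on a copy of `H'` with prescribed labels of `c` and `d`. -/
def hpLab (k c d : ℕ) : HpV k → ℕ
  | .c => c
  | .d => d
  | .e => if d = 0 then 2 * k - 1 - c else 1 - c
  | .f j => j + 2
  | .g => k - d
  | .h => d
  | .i => if d = 0 then 1 else k - 1

/-- The labelling of the gadget. -/
def gkLab (k A B : ℕ) (b : Fin (k - 5) → ℕ) (C D : Bool → ℕ) : GkV k → ℕ
  | .u => 0
  | .v => 0
  | .au => A
  | .av => B
  | .b i => b i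
  | .hp _ s x => hpLab k (C s) (D s) x

lemma mk_labelling {V : Type*} (r : V → V → Prop) (k : ℕ) (L : V → ℕ)
    (h0 : ∀ v, L v ≤ k) (h1 : ∀ x y, r x y → Far (L x) (L y))
    (h2 : ∀ z x y, (r z x ∨ r x z) → (r z y ∨ r y z) → x ≠ y → L x ≠ L y) :
    IsL21Labelling (SimpleGraph.fromRel r) k L := by
  refine ⟨h0, ?_, ?_⟩
  · intro x y h
    rw [far_iff]
    rw [SimpleGraph.fromRel_adj] at h
    rcases h.2 with h | h
    · exact h1 _ _ h
    · exact (h1 _ _ h).symm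
  · intro x y h
    obtain ⟨hne, z, hx, hy⟩ := dist_two_common _ h
    rw [SimpleGraph.fromRel_adj] at hx hy
    exact h2 z x y hx.2 hy.2 hne

lemma backward (k A B : ℕ) (hk : 6 ≤ k) (b : Fin (k - 5) → ℕ) (C D : Bool → ℕ)
    (hA : 2 ≤ A ∧ A ≤ k) (hB : 2 ≤ B ∧ B ≤ k) (hAB : Far A B)
    (hb : Function.Injective b) (hb1 : ∀ i, 1 ≤ b i ∧ b i < k)
    (hbA : ∀ i, Far A (b i)) (hbB : ∀ i, Far B (b i))
    (hCD : ∀ s, (D s = 0 ∧ k - 1 ≤ C s ∧ C s ≤ k) ∨ (D s = k ∧ C s ≤ 1))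
    (hC : C true ≠ C false) (hCA : ∀ s, C s ≠ A) (hCB : ∀ s, C s ≠ B)
    (hCb : ∀ i s, Far (b i) (C s)) :
    IsL21Labelling (Gk k) k (gkLab k A B b C D) := by
  have hC' : ∀ s s', s ≠ s' → C s ≠ C s' := by
    intro s s' h
    cases s <;> cases s' <;> simp_all [eq_comm]
  have hb' : ∀ i i', i ≠ i' → b i ≠ b i' := fun i i' h h' => h (hb h')
  apply mk_labelling
  · intro v
    rcases v with _ | _ | _ | _ | i | ⟨i, s, x⟩
    · simp [gkLab]
    · exact hA.2
    · exact hB.2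
    · simp [gkLab]
    · exact (hb1 i).2.le
    · have := hCD s
      cases x <;> simp only [gkLab, hpLab] <;> first | omega | (split_ifs <;> omega)
  · intro x y h
    rcases h with ⟨rfl, rfl⟩ | ⟨rfl, rfl⟩ | ⟨rfl, rfl⟩ | ⟨i, ⟨rfl, rfl⟩ | ⟨rfl, rfl⟩⟩ |
      ⟨i, s, rfl, rfl⟩ | ⟨i, s, x', y', rfl, rfl, h⟩
    · simp [gkLab, Far]; omega
    · exact hAB
    · simp [gkLab, Far]; omega
    · exact hbA i
    · exact hbB i
    · exact hCb i s
    · have := hCD s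
      rcases h with ⟨rfl, rfl⟩ | ⟨rfl, rfl⟩ | ⟨rfl, rfl⟩ | ⟨rfl, rfl⟩ |
        ⟨j, ⟨rfl, rfl⟩ | ⟨rfl, rfl⟩⟩ <;> simp only [gkLab, hpLab, Far] <;>
        first | omega | (split_ifs <;> omega)
  · have hu : ∀ x, (GkAdj k .u x ∨ GkAdj k x .u) → x = .au := by
      intro x h; simpa [GkAdj] using h
    have hv : ∀ x, (GkAdj k .v x ∨ GkAdj k x .v) → x = .av := by
      intro x h; simpa [GkAdj] using h
    have hau : ∀ x, (GkAdj k .au x ∨ GkAdj k x .au) → x = .u ∨ x = .av ∨ ∃ i, x = .b i := by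
      intro x h; simp [GkAdj] at h; tauto
    have hav : ∀ x, (GkAdj k .av x ∨ GkAdj k x .av) → x = .v ∨ x = .au ∨ ∃ i, x = .b i := by
      intro x h; simp [GkAdj] at h; tauto
    have hbb : ∀ i x, (GkAdj k (.b i) x ∨ GkAdj k x (.b i)) →
        x = .au ∨ x = .av ∨ ∃ s, x = .hp i s .c := by
      intro i x h; simp [GkAdj] at h
      rcases h with (h | h) | ⟨j, ⟨h, -⟩ | ⟨h, -⟩⟩ <;> simp [h]
    have hhp : ∀ i s x' x, (GkAdj k (.hp i s x') x ∨ GkAdj k x (.hp i s x')) →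
        (x' = .c ∧ x = .b i) ∨ ∃ y', x = .hp i s y' ∧ (HpAdj k x' y' ∨ HpAdj k y' x') := by
      intro i s x' x h
      rcases h with h | h
      · rcases h with ⟨h, -⟩ | ⟨h, -⟩ | ⟨h, -⟩ | ⟨j, ⟨h, -⟩ | ⟨h, -⟩⟩ | ⟨i', s', h, -⟩ |
          ⟨i', s', a, c, h, rfl, h'⟩ <;> cases h
        exact Or.inr ⟨c, rfl, Or.inl h'⟩
      · rcases h with ⟨-, h⟩ | ⟨-, h⟩ | ⟨-, h⟩ | ⟨j, ⟨-, h⟩ | ⟨-, h⟩⟩ | ⟨i', s', rfl, h⟩ |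
          ⟨i', s', a, c, rfl, h, h'⟩ <;> cases h
        · exact Or.inl ⟨rfl, rfl⟩
        · exact Or.inr ⟨a, rfl, Or.inr h'⟩
    intro z x y hx hy hne
    rcases z with _ | _ | _ | _ | i | ⟨i, s, z⟩
    · exact absurd ((hu x hx).trans (hu y hy).symm) hne
    · have hAB' := hAB
      unfold Far at hAB' hbB
      rcases hau x hx with rfl | rfl | ⟨i, rfl⟩ <;> rcases hau y hy with rfl | rfl | ⟨j, rfl⟩ <;>
        simp only [gkLab]
      · exact absurd rfl hne
      · omega
      · have := hb1 j; omega
      · omega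
      · exact absurd rfl hne
      · have := hbB j; omega
      · have := hb1 i; omega
      · have := hbB i; omega
      · exact hb' _ _ (by rintro rfl; exact hne rfl)
    · have hAB' := hAB
      unfold Far at hAB' hbA
      rcases hav x hx with rfl | rfl | ⟨i, rfl⟩ <;> rcases hav y hy with rfl | rfl | ⟨j, rfl⟩ <;>
        simp only [gkLab]
      · exact absurd rfl hne
      · omega
      · have := hb1 j; omega
      · omega
      · exact absurd rfl hne
      · have := hbA j; omega
      · have := hb1 i; omega
      · have := hbA i; omega
      · exact hb' _ _ (by rintro rfl; exact hne rfl)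
    · exact absurd ((hv x hx).trans (hv y hy).symm) hne
    · have hAB' := hAB
      unfold Far at hAB'
      rcases hbb i x hx with rfl | rfl | ⟨s, rfl⟩ <;>
        rcases hbb i y hy with rfl | rfl | ⟨s', rfl⟩ <;> simp only [gkLab, hpLab]
      · exact absurd rfl hne
      · omega
      · exact (hCA s').symm
      · omega
      · exact absurd rfl hne
      · exact (hCB s').symm
      · exact hCA s
      · exact hCB s
      · exact hC' _ _ (by rintro rfl; exact hne rfl)
    · have hs := hCD s
      have hbi := hb1 i
      have key : ∀ x' y', (HpAdj k z x' ∨ HpAdj k x' z) → (HpAdj k z y' ∨ HpAdj k y' z) →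
          x' ≠ y' → hpLab k (C s) (D s) x' ≠ hpLab k (C s) (D s) y' := by
        intro x' y' h1 h2 h3
        cases z <;> cases x' <;> simp [HpAdj] at h1 <;> cases y' <;> simp [HpAdj] at h2 <;>
          first
          | exact absurd rfl h3
          | (simp only [hpLab]; first | omega | (split_ifs <;> omega))
          | skip
        all_goals
          rename_i j j'
          have : (j : ℕ) ≠ j' := fun h => h3 (by rw [Fin.ext h])
          simp only [hpLab]
          omega
      have hcn : ∀ y', (HpAdj k .c y' ∨ HpAdj k y' .c) → y' = .d := by
        intro y' h; simpa [HpAdj] using h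
      rcases hhp i s z x hx with ⟨rfl, rfl⟩ | ⟨x', rfl, h1⟩ <;>
        rcases hhp i s _ y hy with ⟨hz, rfl⟩ | ⟨y', rfl, h2⟩
      · exact absurd rfl hne
      · rw [hcn y' h2]
        simp only [gkLab, hpLab]
        omega
      · subst hz
        rw [hcn x' h1]
        simp only [gkLab, hpLab]
        omega
      · exact key x' y' h1 h2 (by rintro rfl; exact hne rfl)

theorem stmt_10 (k : ℕ) (hk : 6 ≤ k) (α β : ℕ) (hα : α ≤ k) (hβ : β ≤ k) :
    (∃ L : GkV k → ℕ, IsL21Labelling (Gk k) k L ∧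
      L GkV.u = 0 ∧ L GkV.v = 0 ∧ L GkV.au = α ∧ L GkV.av = β) ↔
    (α, β) ∈ ({(2,k),(k,2),(k-2,k),(k,k-2)} : Set (ℕ × ℕ)) := by
  simp only [Set.mem_insert_iff, Set.mem_singleton_iff, Prod.mk.injEq]
  constructor
  · rintro ⟨L, hL, hu, hv, rfl, rfl⟩
    have := forward k hk L hL hu hv
    omega
  · intro h
    have h' : ((α = 2 ∧ β = k) ∨ (α = k ∧ β = 2)) ∨ ((α = k - 2 ∧ β = k) ∨ (α = k ∧ β = k - 2)) := by
      omega
    clear h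
    rcases h' with h | h
    · refine ⟨gkLab k α β (fun i => i + 4) (fun s => if s then 0 else 1) (fun _ => k),
        ?_, rfl, rfl, rfl, rfl⟩
      apply backward k α β hk
      · omega
      · omega
      · unfold Far; omega
      · intro i j hij; apply Fin.ext; simpa using hij
      · intro i; have := i.2; omega
      · intro i; have := i.2; unfold Far; omega
      · intro i; have := i.2; unfold Far; omega
      · intro s; cases s <;> simp
      · simp
      · intro s; cases s <;> simp <;> omega
      · intro s; cases s <;> simp <;> omega
      · intro i s; have := i.2; unfold Far; cases s <;> simp
    · refine ⟨gkLab k α β (fun i => i + 2) (fun s => if s then 0 else k - 1)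
        (fun s => if s then k else 0), ?_, rfl, rfl, rfl, rfl⟩
      apply backward k α β hk
      · omega
      · omega
      · unfold Far; omega
      · intro i j hij; apply Fin.ext; simpa using hij
      · intro i; have := i.2; omega
      · intro i; have := i.2; unfold Far; omega
      · intro i; have := i.2; unfold Far; omega
      · intro s; cases s <;> simp
      · simp; omega
      · intro s; cases s <;> simp <;> omega
      · intro s; cases s <;> simp <;> omega
      · intro i s; have := i.2; unfold Far; cases s <;> simp <;> omega
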